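/- For every n ≥ 3, the dimension over ℚ of the linear span of {t_σ : σ ∈ Sₙ} inside Inv(sl₂^{⊗n}) equals Rₙ − (1 + (−1)ⁿ)/2, i.e. Rₙ for n odd and Rₙ − 1 for n even. (Equivalently, the kernel of the homotopy sl₂ weight system W^h_n on the (n−2)!-dimensional space of connected trees has dimension (n−2)! − Rₙ + (1+(−1)ⁿ)/2.) -/

import Mathlib

/- For every n ≥ 3, the dimension of the ℚ-span of {t_σ : σ ∈ Sₙ} inside
   Inv(sl₂^{⊗n}) equals Rₙ − (1+(−1)ⁿ)/2, i.e. Rₙ for n odd and Rₙ − 1 for n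
   even.  κ, the family t, and the Riordan numbers R are quantified via their
   defining properties. -/

open scoped TensorProduct

set_option synthInstance.maxHeartbeats 1000000
set_option maxHeartbeats 1000000

noncomputable section

abbrev sl2 : Type := ↥(LieAlgebra.SpecialLinear.sl (Fin 2) ℚ)

def H : sl2 :=
  ⟨!![1, 0; 0, -1], show _ ∈ LinearMap.ker (Matrix.traceLinearMap (Fin 2) ℚ ℚ) from
    LinearMap.mem_ker.2 (by simp [Matrix.trace_fin_two])⟩

def E : sl2 :=
  ⟨!![0, 1; 0, 0], show _ ∈ LinearMap.ker (Matrix.traceLinearMap (Fin 2) ℚ ℚ) from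
    LinearMap.mem_ker.2 (by simp [Matrix.trace_fin_two])⟩

def F : sl2 :=
  ⟨!![0, 0; 1, 0], show _ ∈ LinearMap.ker (Matrix.traceLinearMap (Fin 2) ℚ ℚ) from
    LinearMap.mem_ker.2 (by simp [Matrix.trace_fin_two])⟩

/-- The n-fold tensor power sl₂^{⊗n}. -/
abbrev TP (n : ℕ) : Type := ⨂[ℚ] (_ : Fin n), sl2

/-- The adjoint action of `x ∈ sl₂` on `sl₂^{⊗n}`, extended as a derivation. -/
def actOn (n : ℕ) (x : sl2) : TP n →ₗ[ℚ] TP n :=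
  ∑ i : Fin n,
    PiTensorProduct.map (fun j => if j = i then LieAlgebra.ad ℚ sl2 x else LinearMap.id)

/-- The space of invariant tensors of `sl₂^{⊗n}`. -/
def Invariants (n : ℕ) : Submodule ℚ (TP n) :=
  ⨅ x : sl2, LinearMap.ker (actOn n x)

/-- Pairing of `sl₂^{⊗n}` against `x₁ ⊗ ⋯ ⊗ xₙ` via `κ^{⊗n}`:
on pure tensors, `pairT κ n x (a₁ ⊗ ⋯ ⊗ aₙ) = ∏ i, κ(aᵢ, xᵢ)`. -/
def pairT (κ : sl2 →ₗ[ℚ] sl2 →ₗ[ℚ] ℚ) (n : ℕ) (x : Fin n → sl2) : TP n →ₗ[ℚ] ℚ :=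
  PiTensorProduct.lift
    ((MultilinearMap.mkPiAlgebra ℚ (Fin n) ℚ).compLinearMap fun i => κ.flip (x i))

/-- Left-iterated Lie bracket of a list: `[[⋯[a₁,a₂],⋯],a_k]`. -/
def lBrk : List sl2 → sl2
  | [] => 0
  | a :: l => l.foldl (fun y z => ⁅y, z⁆) a

/-- `κ([[⋯[x₁,x₂],⋯],x_{k-1}], x_k)`, read as `κ(x₁,x₂)` when `k = 2`. -/
def brkVal (κ : sl2 →ₗ[ℚ] sl2 →ₗ[ℚ] ℚ) {k : ℕ} (x : Fin k → sl2) : ℚ :=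
  κ (lBrk (List.ofFn x).dropLast) ((List.ofFn x).getLastD 0)

/-! ### Trinomial counts -/

def nuW : Fin 3 → ℤ := ![1, 0, -1]

def wgt {n : ℕ} (w : Fin n → Fin 3) : ℤ := ∑ i, nuW (w i)

def TT (n : ℕ) (k : ℤ) : ℕ := Fintype.card {w : Fin n → Fin 3 // wgt w = k}

lemma wgt_cons {n : ℕ} (a : Fin 3) (w : Fin n → Fin 3) :
    wgt (Fin.cons a w : Fin (n+1) → Fin 3) = nuW a + wgt w := by
  simp [wgt, Fin.sum_univ_succ]

lemma sum_cons {M : Type*} [AddCommMonoid M] {n : ℕ} (G : (Fin (n+1) → Fin 3) → M) :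
    ∑ w, G w = ∑ a : Fin 3, ∑ r : Fin n → Fin 3, G (Fin.cons a r) := by
  rw [← (Fin.consEquiv (fun _ : Fin (n+1) => Fin 3)).sum_comp, Fintype.sum_prod_type]
  rfl

lemma TT_eq_sum (n : ℕ) (k : ℤ) :
    TT n k = ∑ w : Fin n → Fin 3, if wgt w = k then 1 else 0 := by
  rw [TT, Fintype.card_subtype, Finset.card_filter]

lemma TT_zero (k : ℤ) : TT 0 k = if k = 0 then 1 else 0 := by
  rw [TT_eq_sum]
  simp [wgt, eq_comm]

lemma TT_succ (n : ℕ) (k : ℤ) : TT (n+1) k = TT n (k-1) + TT n k + TT n (k+1) := by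
  simp only [TT_eq_sum]
  rw [sum_cons, Fin.sum_univ_three]
  simp only [wgt_cons, nuW]
  congr 1
  · congr 1
    · refine Finset.sum_congr rfl fun w _ => ?_
      congr 1
      simp only [Matrix.cons_val_zero, eq_iff_iff]
      constructor <;> intro h <;> omega
    · refine Finset.sum_congr rfl fun w _ => ?_
      simp
  · refine Finset.sum_congr rfl fun w _ => ?_
    congr 1
    simp only [Matrix.cons_val, eq_iff_iff]
    constructor <;> intro h <;> omega

lemma TT_neg (n : ℕ) : ∀ k : ℤ, TT n (-k) = TT n k := by
  induction n with
  | zero => intro k; simp [TT_zero]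
  | succ n ih =>
    intro k
    rw [TT_succ, TT_succ, ← ih (k-1), ← ih (k+1), ih k]
    rw [show -(k-1) = -k+1 by ring, show -(k+1) = -k-1 by ring]
    ring

lemma TT_rel (n : ℕ) : ∀ k : ℤ, ((n:ℤ) - k + 1) * TT n (k-1) = k * TT n k
    + (n + k + 1) * TT n (k+1) := by
  induction n with
  | zero =>
    intro k
    simp only [TT_zero]
    split_ifs <;> push_cast <;> grind
  | succ n ih =>
    intro k
    have h1 := ih (k-1)
    have h2 := ih k
    have h3 := ih (k+1)
    simp only [TT_succ]
    push_cast
    rw [show k - 1 + 1 = k by ring] at *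
    rw [show k + 1 - 1 = k by ring] at *
    linear_combination h1 + h2 + h3

lemma R_eq (R : ℕ → ℕ) (hR2 : R 2 = 1) (hR3 : R 3 = 1)
    (hRrec : ∀ n, 4 ≤ n → (n + 1) * R n = (n - 1) * (2 * R (n - 1) + 3 * R (n - 2))) :
    ∀ n, (R (n+2) + TT (n+2) 1 = TT (n+2) 0) ∧ (R (n+3) + TT (n+3) 1 = TT (n+3) 0) := by
  intro n
  induction n with
  | zero =>
    simp [hR2, hR3, TT_succ, TT_zero]
  | succ n ih =>
    refine ⟨ih.2, ?_⟩
    obtain ⟨i1, i2⟩ := ih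
    have hr := hRrec (n+4) (by omega)
    rw [show n + 4 - 1 = n + 3 by omega, show n + 4 - 2 = n + 2 by omega] at hr
    rw [show n + 1 + 3 = n + 4 by ring]
    have k1 := TT_rel (n+2) 1
    have k2 := TT_rel (n+2) 2
    have e2 : TT (n+3) 0 = TT (n+2) (-1) + TT (n+2) 0 + TT (n+2) 1 := by
      rw [TT_succ]; simp
    have e3 : TT (n+3) 1 = TT (n+2) 0 + TT (n+2) 1 + TT (n+2) 2 := by
      rw [TT_succ]; simp
    have e3' : TT (n+3) 2 = TT (n+2) 1 + TT (n+2) 2 + TT (n+2) 3 := by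
      rw [TT_succ]; simp
    have e4 : TT (n+4) 0 = TT (n+3) (-1) + TT (n+3) 0 + TT (n+3) 1 := by
      rw [TT_succ]; simp
    have e5 : TT (n+4) 1 = TT (n+3) 0 + TT (n+3) 1 + TT (n+3) 2 := by
      rw [TT_succ]; simp
    rw [TT_neg] at e2 e4
    norm_num at k1 k2
    rw [e4, e5, e2, e3, e3']
    rw [e2, e3] at i2
    clear e2 e3 e3' e4 e5
    generalize TT (n+2) 0 = a at *
    generalize TT (n+2) 1 = b at *
    generalize TT (n+2) 2 = c at *
    generalize TT (n+2) 3 = d at *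
    zify at *
    have hpos : ((n:ℤ) + 4 + 1) ≠ 0 := by positivity
    apply mul_left_cancel₀ hpos
    linear_combination hr + 2 * k1 - k2 + (n+3) * 2 * i2 + (n+3) * 3 * i1

/-! ### Operators on functions on words -/

def opr (α : Fin 3 → ℚ) (p : Fin 3 → Fin 3) {n : ℕ} :
    ((Fin n → Fin 3) → ℚ) →ₗ[ℚ] ((Fin n → Fin 3) → ℚ) where
  toFun f := fun w => ∑ i, α (w i) * f (Function.update w i (p (w i)))
  map_add' f g := by
    ext w; simp [mul_add, Finset.sum_add_distrib]
  map_smul' c f := by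
    ext w; simp only [Pi.smul_apply, smul_eq_mul, RingHom.id_apply, Finset.mul_sum]
    refine Finset.sum_congr rfl fun i _ => by ring

lemma opr_apply (α : Fin 3 → ℚ) (p : Fin 3 → Fin 3) {n : ℕ} (f : (Fin n → Fin 3) → ℚ)
    (w : Fin n → Fin 3) :
    opr α p f w = ∑ i, α (w i) * f (Function.update w i (p (w i))) := rfl

lemma opr_cons (α : Fin 3 → ℚ) (p : Fin 3 → Fin 3) {n : ℕ} (f : (Fin (n+1) → Fin 3) → ℚ)
    (a : Fin 3) (r : Fin n → Fin 3) :
    opr α p f (Fin.cons a r) = α a * f (Fin.cons (p a) r)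
      + opr α p (fun r => f (Fin.cons a r)) r := by
  simp only [opr_apply, Fin.sum_univ_succ, Fin.cons_zero, Fin.cons_succ, Fin.update_cons_zero,
    Fin.cons_update]

def eA : Fin 3 → ℚ := ![0, -2, 1]
def eP : Fin 3 → Fin 3 := ![0, 0, 1]
def fA : Fin 3 → ℚ := ![-1, 2, 0]
def fP : Fin 3 → Fin 3 := ![1, 2, 2]

abbrev opE {n : ℕ} := opr eA eP (n := n)
abbrev opF {n : ℕ} := opr fA fP (n := n)

/-- weights of the positive definite form -/
def hw : Fin 3 → ℚ := ![1, 1/2, 1]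

@[simp] lemma eA_0 : eA 0 = 0 := rfl
@[simp] lemma eA_1 : eA 1 = -2 := rfl
@[simp] lemma eA_2 : eA 2 = 1 := rfl
@[simp] lemma eP_0 : eP 0 = 0 := rfl
@[simp] lemma eP_1 : eP 1 = 0 := rfl
@[simp] lemma eP_2 : eP 2 = 1 := rfl
@[simp] lemma fA_0 : fA 0 = -1 := rfl
@[simp] lemma fA_1 : fA 1 = 2 := rfl
@[simp] lemma fA_2 : fA 2 = 0 := rfl
@[simp] lemma fP_0 : fP 0 = 1 := rfl
@[simp] lemma fP_1 : fP 1 = 2 := rfl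
@[simp] lemma fP_2 : fP 2 = 2 := rfl
@[simp] lemma hw_0 : hw 0 = 1 := rfl
@[simp] lemma hw_1 : hw 1 = 1/2 := rfl
@[simp] lemma hw_2 : hw 2 = 1 := rfl
@[simp] lemma nuW_0 : nuW 0 = 1 := rfl
@[simp] lemma nuW_1 : nuW 1 = 0 := rfl
@[simp] lemma nuW_2 : nuW 2 = -1 := rfl

def ww {n : ℕ} (w : Fin n → Fin 3) : ℚ := ∏ i, hw (w i)

lemma ww_pos {n : ℕ} (w : Fin n → Fin 3) : 0 < ww w := by
  refine Finset.prod_pos fun i _ => ?_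
  generalize w i = a
  fin_cases a <;> simp

lemma ww_cons {n : ℕ} (a : Fin 3) (w : Fin n → Fin 3) :
    ww (Fin.cons a w : Fin (n+1) → Fin 3) = hw a * ww w := by
  simp [ww, Fin.prod_univ_succ]

def ip {n : ℕ} (f g : (Fin n → Fin 3) → ℚ) : ℚ := ∑ w, ww w * f w * g w

lemma ip_cons {n : ℕ} (f g : (Fin (n+1) → Fin 3) → ℚ) :
    ip f g = ∑ a, hw a * ip (fun r => f (Fin.cons a r)) (fun r => g (Fin.cons a r)) := by
  simp only [ip, sum_cons, ww_cons, Finset.mul_sum, mul_assoc]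

lemma ip_comm {n : ℕ} (f g : (Fin n → Fin 3) → ℚ) : ip f g = ip g f := by
  simp only [ip]; refine Finset.sum_congr rfl fun i _ => by ring

lemma ip_add_left {n : ℕ} (f f' g : (Fin n → Fin 3) → ℚ) :
    ip (f + f') g = ip f g + ip f' g := by
  simp only [ip, ← Finset.sum_add_distrib]
  refine Finset.sum_congr rfl fun i _ => by simp only [Pi.add_apply]; ring

lemma ip_smul_left {n : ℕ} (c : ℚ) (f g : (Fin n → Fin 3) → ℚ) :
    ip (c • f) g = c * ip f g := by
  simp only [ip, Finset.mul_sum]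
  refine Finset.sum_congr rfl fun i _ => by simp only [Pi.smul_apply, smul_eq_mul]; ring

lemma ip_add_right {n : ℕ} (f g g' : (Fin n → Fin 3) → ℚ) :
    ip f (g + g') = ip f g + ip f g' := by
  rw [ip_comm, ip_add_left, ip_comm g, ip_comm g']

lemma ip_smul_right {n : ℕ} (c : ℚ) (f g : (Fin n → Fin 3) → ℚ) :
    ip f (c • g) = c * ip f g := by
  rw [ip_comm, ip_smul_left, ip_comm g]

lemma ip_self_nonneg {n : ℕ} (f : (Fin n → Fin 3) → ℚ) : 0 ≤ ip f f := by
  refine Finset.sum_nonneg fun w _ => ?_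
  have := ww_pos w
  rw [mul_assoc]
  exact mul_nonneg this.le (mul_self_nonneg _)

lemma ip_self_eq_zero {n : ℕ} {f : (Fin n → Fin 3) → ℚ} (h : ip f f = 0) : f = 0 := by
  ext w
  rw [ip, Finset.sum_eq_zero_iff_of_nonneg] at h
  · have h1 := h w (Finset.mem_univ _)
    have := ww_pos w
    rw [mul_assoc] at h1
    rcases mul_eq_zero.1 h1 with h2 | h2
    · exact absurd h2 this.ne'
    · simpa using h2
  · intro w _
    rw [mul_assoc]
    exact mul_nonneg (ww_pos w).le (mul_self_nonneg _)

lemma opE_adj {n : ℕ} : ∀ f g : (Fin n → Fin 3) → ℚ, ip (opE f) g = ip f (opF g) := by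
  induction n with
  | zero => intro f g; simp [ip, opr_apply]
  | succ n ih =>
    intro f g
    have key : ∀ (c : ℚ) (f₁ f₂ g : (Fin n → Fin 3) → ℚ),
        ip (fun r => c * f₁ r + f₂ r) g = c * ip f₁ g + ip f₂ g := by
      intro c f₁ f₂ g
      rw [← ip_smul_left, ← ip_add_left]; rfl
    have key2 : ∀ (c : ℚ) (f₁ f₂ g : (Fin n → Fin 3) → ℚ),
        ip g (fun r => c * f₁ r + f₂ r) = c * ip g f₁ + ip g f₂ := by
      intro c f₁ f₂ g
      rw [← ip_smul_right, ← ip_add_right]; rfl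
    simp only [ip_cons, opr_cons, key, key2, ← ih, Fin.sum_univ_three]
    simp
    ring

lemma op_comm {n : ℕ} : ∀ (f : (Fin n → Fin 3) → ℚ) (w : Fin n → Fin 3),
    opE (opF f) w = opF (opE f) w - 2 * (wgt w : ℚ) * f w := by
  induction n with
  | zero => intro f w; simp [opr_apply, wgt]
  | succ n ih =>
    intro f w
    induction w using Fin.consCases with
    | _ a r =>
    have key : ∀ (α : Fin 3 → ℚ) (p : Fin 3 → Fin 3) (c : ℚ) (f₁ f₂ : (Fin n → Fin 3) → ℚ) (r),
        opr α p (fun r => c * f₁ r + f₂ r) r = c * opr α p f₁ r + opr α p f₂ r := by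
      intro α p c f₁ f₂ r
      have : (fun r => c * f₁ r + f₂ r) = c • f₁ + f₂ := rfl
      rw [this, map_add, map_smul]; rfl
    simp only [opr_cons, key]
    have := ih (fun r => f (Fin.cons a r)) r
    rw [this, wgt_cons]
    fin_cases a <;> simp <;> ring

/-- functions supported on words of weight `k` -/
def supp (n : ℕ) (k : ℤ) : Submodule ℚ ((Fin n → Fin 3) → ℚ) where
  carrier := {f | ∀ w, wgt w ≠ k → f w = 0}
  add_mem' := by
    intro a b ha hb w h
    simp [ha w h, hb w h]
  zero_mem' := by intro w h; rfl
  smul_mem' := by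
    intro c a ha w h
    simp [ha w h]

lemma wgt_update {n : ℕ} (w : Fin n → Fin 3) (i : Fin n) (c : Fin 3) :
    wgt (Function.update w i c) = wgt w - nuW (w i) + nuW c := by
  have h : wgt (Function.update w i c) - wgt w = nuW c - nuW (w i) := by
    rw [wgt, wgt, ← Finset.sum_sub_distrib, Finset.sum_eq_single i]
    · simp
    · intro j _ hj; simp [Function.update_of_ne hj]
    · simp
  linarith

lemma opE_supp {n : ℕ} {k : ℤ} {f : (Fin n → Fin 3) → ℚ} (hf : f ∈ supp n k) :
    opE f ∈ supp n (k - 1) := by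
  intro w hw
  rw [opr_apply]
  refine Finset.sum_eq_zero fun i _ => ?_
  by_cases h : eA (w i) = 0
  · rw [h, zero_mul]
  · rw [hf, mul_zero]
    rw [wgt_update]
    generalize w i = a at *
    fin_cases a <;> simp at * <;> omega

lemma opF_supp {n : ℕ} {k : ℤ} {f : (Fin n → Fin 3) → ℚ} (hf : f ∈ supp n k) :
    opF f ∈ supp n (k + 1) := by
  intro w hw
  rw [opr_apply]
  refine Finset.sum_eq_zero fun i _ => ?_
  by_cases h : fA (w i) = 0
  · rw [h, zero_mul]
  · rw [hf, mul_zero]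
    rw [wgt_update]
    generalize w i = a at *
    fin_cases a <;> simp at * <;> omega

lemma finrank_supp (n : ℕ) (k : ℤ) : Module.finrank ℚ (supp n k) = TT n k := by
  let φ : supp n k ≃ₗ[ℚ] ({w : Fin n → Fin 3 // wgt w = k} → ℚ) :=
    { toFun := fun f w => f.1 w.1
      map_add' := fun f g => rfl
      map_smul' := fun c f => rfl
      invFun := fun g => ⟨fun w => if h : wgt w = k then g ⟨w, h⟩ else 0, by
        intro w h; simp [h]⟩
      left_inv := by
        intro f
        ext w
        by_cases h : wgt w = k
        · simp [h]
        · simp [h, f.2 w h]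
      right_inv := by
        intro g
        ext w
        simp [w.2] }
  rw [φ.finrank_eq, Module.finrank_fintype_fun_eq_card, TT]

/-- the invariants -/
def GG (n : ℕ) : Submodule ℚ ((Fin n → Fin 3) → ℚ) := supp n 0 ⊓ LinearMap.ker opE

lemma finrank_GG (n : ℕ) : Module.finrank ℚ (GG n) + TT n 1 = TT n 0 := by
  let e0 : supp n 0 →ₗ[ℚ] supp n (-1) := LinearMap.restrict opE (fun f hf => by
    simpa using opE_supp hf)
  let f0 : supp n (-1) →ₗ[ℚ] supp n 0 := LinearMap.restrict opF (fun f hf => by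
    simpa using opF_supp hf)
  have hinj : Function.Injective (e0 ∘ₗ f0) := by
    rw [injective_iff_map_eq_zero]
    intro b hb
    have h1 : opE (opF b.1) = 0 := congrArg Subtype.val hb
    have h2 : opE (opF b.1) = opF (opE b.1) + (2:ℚ) • b.1 := by
      ext w
      rw [op_comm]
      simp only [Pi.add_apply, Pi.smul_apply, smul_eq_mul]
      by_cases h : wgt w = -1
      · rw [h]; push_cast; ring
      · rw [b.2 w h]; ring
    have h3 : ip (opE b.1) (opE b.1) + 2 * ip b.1 b.1 = 0 := by
      rw [opE_adj, ← ip_smul_right, ← ip_add_right, ← h2, h1]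
      simp [ip]
    have h4 : ip b.1 b.1 = 0 := by
      have := ip_self_nonneg b.1
      have := ip_self_nonneg (opE b.1)
      linarith
    exact Subtype.ext (ip_self_eq_zero h4)
  have hsurj : Function.Surjective e0 := by
    have := LinearMap.surjective_of_injective hinj
    intro y
    obtain ⟨x, hx⟩ := this y
    exact ⟨f0 x, hx⟩
  have hk : Module.finrank ℚ (LinearMap.ker e0) = Module.finrank ℚ (GG n) := by
    have : LinearMap.ker e0 = (GG n).comap (supp n 0).subtype := by
      ext x
      simp only [LinearMap.mem_ker, Submodule.mem_comap, GG, Submodule.mem_inf, e0]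
      constructor
      · intro h; exact ⟨x.2, congrArg Subtype.val h⟩
      · intro h; exact Subtype.ext h.2
    rw [this]
    exact (Submodule.comapSubtypeEquivOfLe (inf_le_left)).finrank_eq
  have := LinearMap.finrank_range_add_finrank_ker e0
  rw [LinearMap.range_eq_top.2 hsurj, finrank_top, finrank_supp, finrank_supp, hk,
    TT_neg] at this
  omega

/-! ### sl2 and trees -/

lemma sl2_decomp (x : sl2) : x = x.1 0 1 • E + x.1 0 0 • H + x.1 1 0 • F := by
  have hx : Matrix.trace x.1 = 0 := LinearMap.mem_ker.1 x.2
  rw [Matrix.trace_fin_two] at hx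
  apply Subtype.ext
  ext i j
  fin_cases i <;> fin_cases j <;> simp [E, H, F]
  linarith

lemma sl2_ext {x y : sl2} (h : ∀ i j, x.1 i j = y.1 i j) : x = y :=
  Subtype.ext (Matrix.ext h)

lemma lie_val (x y : sl2) : (⁅x, y⁆ : sl2).1 = x.1 * y.1 - y.1 * x.1 := rfl

def bb : Fin 3 → sl2 := ![E, H, F]

@[simp] lemma bb_0 : bb 0 = E := rfl
@[simp] lemma bb_1 : bb 1 = H := rfl
@[simp] lemma bb_2 : bb 2 = F := rfl

/-- bracket table -/
def sB : Fin 3 → Fin 3 → ℚ := ![![0, -2, 1], ![2, 0, -2], ![-1, 2, 0]]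
def mB : Fin 3 → Fin 3 → Fin 3 := ![![0, 0, 1], ![0, 0, 2], ![1, 2, 0]]

lemma lie_bb (a b : Fin 3) : ⁅bb a, bb b⁆ = sB a b • bb (mB a b) := by
  apply sl2_ext
  intro i j
  rw [lie_val]
  fin_cases a <;> fin_cases b <;> fin_cases i <;> fin_cases j <;>
    simp [bb, E, H, F, sB, mB] <;> norm_num

lemma lie_E_bb (a : Fin 3) : ⁅E, bb a⁆ = eA a • bb (eP a) := by
  have := lie_bb 0 a
  rw [bb_0] at this
  rw [this]
  fin_cases a <;> simp [sB, mB]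

lemma lie_H_bb (a : Fin 3) : ⁅H, bb a⁆ = (2 * (nuW a : ℚ)) • bb a := by
  have := lie_bb 1 a
  rw [bb_1] at this
  rw [this]
  fin_cases a <;> simp [sB, mB]

lemma kappa_eq (κ : sl2 →ₗ[ℚ] sl2 →ₗ[ℚ] ℚ)
    (hHH : κ H H = 2) (hEF : κ E F = 1) (hFE : κ F E = 1)
    (hHE : κ H E = 0) (hEH : κ E H = 0) (hHF : κ H F = 0) (hFH : κ F H = 0)
    (hEE : κ E E = 0) (hFF : κ F F = 0) (x y : sl2) :
    κ x y = x.1 0 1 * y.1 1 0 + 2 * (x.1 0 0 * y.1 0 0) + x.1 1 0 * y.1 0 1 := by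
  conv_lhs => rw [sl2_decomp x, sl2_decomp y]
  simp only [map_add, map_smul, LinearMap.add_apply, LinearMap.smul_apply, hHH, hEF, hFE, hHE,
    hEH, hHF, hFH, hEE, hFF, smul_eq_mul]
  ring

lemma kappa_inv (κ : sl2 →ₗ[ℚ] sl2 →ₗ[ℚ] ℚ)
    (h : ∀ x y : sl2,
      κ x y = x.1 0 1 * y.1 1 0 + 2 * (x.1 0 0 * y.1 0 0) + x.1 1 0 * y.1 0 1) (x y z : sl2) :
    κ ⁅x, y⁆ z = κ x ⁅y, z⁆ := by
  have hx : Matrix.trace x.1 = 0 := LinearMap.mem_ker.1 x.2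
  have hy : Matrix.trace y.1 = 0 := LinearMap.mem_ker.1 y.2
  have hz : Matrix.trace z.1 = 0 := LinearMap.mem_ker.1 z.2
  rw [Matrix.trace_fin_two] at hx hy hz
  have hx' : x.1 1 1 = - x.1 0 0 := by linarith
  have hy' : y.1 1 1 = - y.1 0 0 := by linarith
  have hz' : z.1 1 1 = - z.1 0 0 := by linarith
  rw [h, h, lie_val, lie_val]
  simp only [Matrix.sub_apply, Matrix.mul_apply, Fin.sum_univ_two, hx', hy', hz']
  ring

def val (κ : sl2 →ₗ[ℚ] sl2 →ₗ[ℚ] ℚ) (L : List sl2) : ℚ := κ (lBrk L.dropLast) (L.getLastD 0)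

def tv (κ : sl2 →ₗ[ℚ] sl2 →ₗ[ℚ] ℚ) : sl2 → List sl2 → ℚ
  | _, [] => 0
  | a, [z] => κ a z
  | a, y :: z :: l => tv κ ⁅a, y⁆ (z :: l)

lemma val_cons (κ : sl2 →ₗ[ℚ] sl2 →ₗ[ℚ] ℚ) (l : List sl2) :
    ∀ a, val κ (a :: l) = tv κ a l := by
  have key : ∀ (l : List sl2) (a : sl2), l ≠ [] → val κ (a :: l) = tv κ a l := by
    intro l
    induction l with
    | nil => intro a h; exact absurd rfl h
    | cons y l ih =>
      intro a _
      cases l with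
      | nil => simp [val, tv, lBrk]
      | cons z l =>
        rw [tv, ← ih _ (by simp)]
        simp [val, lBrk]
  intro a
  by_cases h : l = []
  · subst h; simp [val, tv, lBrk]
  · exact key l a h

lemma tv_step (κ : sl2 →ₗ[ℚ] sl2 →ₗ[ℚ] ℚ) (a x : sl2) (l : List sl2) (h : l ≠ []) :
    tv κ a (x :: l) = tv κ ⁅a, x⁆ l := by
  cases l with
  | nil => exact absurd rfl h
  | cons z l => rw [tv]

lemma tv_smul_head (κ : sl2 →ₗ[ℚ] sl2 →ₗ[ℚ] ℚ) (c : ℚ) (l : List sl2) :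
    ∀ a, tv κ (c • a) l = c * tv κ a l := by
  induction l with
  | nil => intro a; simp [tv]
  | cons y l ih =>
    intro a
    cases l with
    | nil => simp [tv]
    | cons z l => rw [tv, tv, smul_lie, ih]

lemma tv_add_head (κ : sl2 →ₗ[ℚ] sl2 →ₗ[ℚ] ℚ) (l : List sl2) :
    ∀ a b, tv κ (a + b) l = tv κ a l + tv κ b l := by
  induction l with
  | nil => intro a b; simp [tv]
  | cons y l ih =>
    intro a b
    cases l with
    | nil => simp [tv]
    | cons z l => rw [tv, tv, tv, add_lie, ih]

lemma tv_smul_mid (κ : sl2 →ₗ[ℚ] sl2 →ₗ[ℚ] ℚ) (c : ℚ) (y : sl2) (l1 l2 : List sl2) :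
    ∀ a, tv κ a (l1 ++ (c • y) :: l2) = c * tv κ a (l1 ++ y :: l2) := by
  induction l1 with
  | nil =>
    intro a
    cases l2 with
    | nil => simp [tv]
    | cons z l => simp only [List.nil_append]; rw [tv, tv, lie_smul, tv_smul_head]
  | cons x l ih =>
    intro a
    simp only [List.cons_append]
    rw [tv_step κ a x _ (by simp), tv_step κ a x _ (by simp), ih]

lemma val_smul_mid (κ : sl2 →ₗ[ℚ] sl2 →ₗ[ℚ] ℚ) (c : ℚ) (y : sl2) (l1 l2 : List sl2) :
    val κ (l1 ++ (c • y) :: l2) = c * val κ (l1 ++ y :: l2) := by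
  cases l1 with
  | nil => simp only [List.nil_append, val_cons, tv_smul_head]
  | cons x l => simp only [List.cons_append, val_cons, tv_smul_mid]

lemma tv_lie_mid (κ : sl2 →ₗ[ℚ] sl2 →ₗ[ℚ] ℚ) (y z : sl2) (l1 l2 : List sl2) (h2 : l2 ≠ []) :
    ∀ a, tv κ a (l1 ++ ⁅y, z⁆ :: l2) = tv κ a (l1 ++ y :: z :: l2) - tv κ a (l1 ++ z :: y :: l2) := by
  induction l1 with
  | nil =>
    intro a
    cases l2 with
    | nil => exact absurd rfl h2
    | cons u l =>
      simp only [List.nil_append, tv]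
      have : ⁅⁅a, y⁆, z⁆ = ⁅a, ⁅y, z⁆⁆ + ⁅⁅a, z⁆, y⁆ := by
        rw [leibniz_lie a y z, ← lie_skew ⁅a, z⁆ y]; abel
      rw [this, tv_add_head]; ring
  | cons x l ih =>
    intro a
    simp only [List.cons_append]
    rw [tv_step κ a x _ (by simp), tv_step κ a x _ (by simp), tv_step κ a x _ (by simp), ih]

lemma tv_lie_last (κ : sl2 →ₗ[ℚ] sl2 →ₗ[ℚ] ℚ) (hκ : ∀ x y z : sl2, κ ⁅x, y⁆ z = κ x ⁅y, z⁆)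
    (y z : sl2) (l1 : List sl2) :
    ∀ a, tv κ a (l1 ++ [⁅y, z⁆]) = tv κ a (l1 ++ [y, z]) := by
  induction l1 with
  | nil => intro a; simp [tv, hκ]
  | cons x l ih =>
    intro a
    simp only [List.cons_append]
    rw [tv_step κ a x _ (by simp), tv_step κ a x _ (by simp), ih]

lemma tv_der (κ : sl2 →ₗ[ℚ] sl2 →ₗ[ℚ] ℚ) (hκ : ∀ x y z : sl2, κ ⁅x, y⁆ z = κ x ⁅y, z⁆)
    {ι : Type} [DecidableEq ι] (x : ι → sl2) (e : sl2) (l : List ι) (hl : l.Nodup) :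
    ∀ a, tv κ ⁅e, a⁆ (l.map x)
      + (l.map fun i => tv κ a (l.map (Function.update x i ⁅e, x i⁆))).sum = 0 := by
  induction l with
  | nil => intro a; simp [tv]
  | cons i l ih =>
    intro a
    rw [List.nodup_cons] at hl
    have hup : ∀ y, l.map (Function.update x i y) = l.map x := by
      intro y
      refine List.map_congr_left fun j hj => ?_
      rw [Function.update_of_ne]
      rintro rfl; exact hl.1 hj
    have hne : ∀ k ∈ l, i ≠ k := by
      rintro k hk rfl; exact hl.1 hk
    cases l with
    | nil =>
      simp only [List.map_cons, List.map_nil, tv, Function.update_self, List.sum_cons,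
        List.sum_nil, add_zero]
      rw [← hκ, ← lie_skew, map_neg]; simp
    | cons j l =>
      have := ih hl.2 ⁅a, x i⁆
      have e1 : ∀ y a, tv κ a (y :: (j :: l).map x) = tv κ ⁅a, y⁆ ((j :: l).map x) := by
        intro y a; simp [tv]
      have e2 : ((j :: l).map fun k =>
          tv κ a ((i :: j :: l).map (Function.update x k ⁅e, x k⁆))) =
          (j :: l).map fun k => tv κ ⁅a, x i⁆ ((j :: l).map (Function.update x k ⁅e, x k⁆)) := by
        refine List.map_congr_left fun k hk => ?_
        rw [List.map_cons, Function.update_of_ne (hne k hk)]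
        simp [tv]
      have e3 : tv κ a ((i :: j :: l).map (Function.update x i ⁅e, x i⁆)) =
          tv κ ⁅a, ⁅e, x i⁆⁆ ((j :: l).map x) := by
        rw [List.map_cons, hup, Function.update_self, e1]
      have e4 : tv κ ⁅e, a⁆ ((i :: j :: l).map x) = tv κ ⁅⁅e, a⁆, x i⁆ ((j :: l).map x) := by
        rw [List.map_cons, e1]
      have e5 : ((i :: j :: l).map fun k =>
          tv κ a ((i :: j :: l).map (Function.update x k ⁅e, x k⁆))).sum =
          tv κ a ((i :: j :: l).map (Function.update x i ⁅e, x i⁆)) + ((j :: l).map fun k =>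
          tv κ a ((i :: j :: l).map (Function.update x k ⁅e, x k⁆))).sum := by
        rw [← List.sum_cons]; rfl
      rw [e5, e2, e3, e4, ← add_assoc, ← tv_add_head]
      rw [leibniz_lie e a (x i)] at this
      exact this

lemma val_der (κ : sl2 →ₗ[ℚ] sl2 →ₗ[ℚ] ℚ) (hκ : ∀ x y z : sl2, κ ⁅x, y⁆ z = κ x ⁅y, z⁆)
    {ι : Type} [DecidableEq ι] (x : ι → sl2) (e : sl2) (l : List ι) (hl : l.Nodup) :
    (l.map fun i => val κ (l.map (Function.update x i ⁅e, x i⁆))).sum = 0 := by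
  cases l with
  | nil => simp
  | cons i l =>
    rw [List.nodup_cons] at hl
    have hup : ∀ y, l.map (Function.update x i y) = l.map x := by
      intro y
      refine List.map_congr_left fun j hj => ?_
      rw [Function.update_of_ne]
      rintro rfl; exact hl.1 hj
    have hne : ∀ k ∈ l, i ≠ k := by
      rintro k hk rfl; exact hl.1 hk
    rw [List.map_cons, List.sum_cons]
    have e2 : (l.map fun k => val κ ((i :: l).map (Function.update x k ⁅e, x k⁆))) =
          l.map fun k => tv κ (x i) (l.map (Function.update x k ⁅e, x k⁆)) := by
        refine List.map_congr_left fun k hk => ?_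
        rw [List.map_cons, Function.update_of_ne (hne k hk), val_cons]
    rw [e2, List.map_cons, hup, Function.update_self, val_cons]
    exact tv_der κ hκ x e l hl.2 (x i)

/-- tree functions on words -/
def FT (κ : sl2 →ₗ[ℚ] sl2 →ₗ[ℚ] ℚ) {n : ℕ} (l : List (Fin n)) : (Fin n → Fin 3) → ℚ :=
  fun w => val κ (l.map fun i => bb (w i))

lemma map_update_split {ι β : Type} [DecidableEq ι] (x : ι → β) (i : ι) (y : β) (l1 l2 : List ι)
    (h : (l1 ++ i :: l2).Nodup) :
    (l1 ++ i :: l2).map (Function.update x i y) = l1.map x ++ y :: l2.map x := by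
  have h' := List.nodup_middle.1 h
  rw [List.nodup_cons, List.mem_append, not_or] at h'
  have hup : ∀ l : List ι, i ∉ l → l.map (Function.update x i y) = l.map x := by
    intro l hl
    refine List.map_congr_left fun j hj => ?_
    rw [Function.update_of_ne]
    rintro rfl; exact hl hj
  rw [List.map_append, List.map_cons, hup _ h'.1.1, hup _ h'.1.2, Function.update_self]

lemma val_smul_update (κ : sl2 →ₗ[ℚ] sl2 →ₗ[ℚ] ℚ) {ι : Type} [DecidableEq ι] (x : ι → sl2)
    (i : ι) (c : ℚ) (y : sl2) (l : List ι) (hl : l.Nodup) (hi : i ∈ l) :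
    val κ (l.map (Function.update x i (c • y))) = c * val κ (l.map (Function.update x i y)) := by
  obtain ⟨l1, l2, rfl⟩ := List.append_of_mem hi
  rw [map_update_split _ _ _ _ _ hl, map_update_split _ _ _ _ _ hl, val_smul_mid]

lemma FT_der (κ : sl2 →ₗ[ℚ] sl2 →ₗ[ℚ] ℚ) (hκ : ∀ x y z : sl2, κ ⁅x, y⁆ z = κ x ⁅y, z⁆)
    {n : ℕ} (l : List (Fin n)) (hl : l.Perm (List.finRange n)) (e : sl2) (α : Fin 3 → ℚ)
    (p : Fin 3 → Fin 3) (he : ∀ a, ⁅e, bb a⁆ = α a • bb (p a)) :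
    opr α p (FT κ l) = 0 := by
  have hnd : l.Nodup := hl.nodup_iff.2 (List.nodup_finRange n)
  ext w
  have := val_der κ hκ (fun i => bb (w i)) e l hnd
  rw [opr_apply, Fin.sum_univ_def, ← (hl.map _).sum_eq, Pi.zero_apply, ← this]
  congr 1
  refine List.map_congr_left fun i hi => ?_
  rw [he, val_smul_update κ _ _ _ _ l hnd hi]
  congr 1
  simp only [FT]
  congr 1
  refine List.map_congr_left fun j hj => ?_
  by_cases h : j = i
  · subst h; simp
  · simp [Function.update_of_ne h]

lemma FT_mem (κ : sl2 →ₗ[ℚ] sl2 →ₗ[ℚ] ℚ) (hκ : ∀ x y z : sl2, κ ⁅x, y⁆ z = κ x ⁅y, z⁆)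
    {n : ℕ} (l : List (Fin n)) (hl : l.Perm (List.finRange n)) : FT κ l ∈ GG n := by
  refine ⟨?_, FT_der κ hκ l hl E eA eP lie_E_bb⟩
  intro w hw
  have := congrFun (FT_der κ hκ l hl H (fun a => 2 * (nuW a : ℚ)) id lie_H_bb) w
  rw [opr_apply] at this
  simp only [id, Function.update_eq_self, Pi.zero_apply] at this
  rw [← Finset.sum_mul, ← Finset.mul_sum, ← Int.cast_sum] at this
  have h2 : ((∑ i, nuW (w i) : ℤ) : ℚ) ≠ 0 := by exact_mod_cast hw
  have h3 : (2 : ℚ) * ((∑ i, nuW (w i) : ℤ) : ℚ) ≠ 0 := by simpa using h2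
  exact (mul_eq_zero.1 this).resolve_left h3

/-! ### Permutations and contraction -/

def pm {n : ℕ} (π : Equiv.Perm (Fin n)) (g : (Fin n → Fin 3) → ℚ) : (Fin n → Fin 3) → ℚ :=
  fun w => g (w ∘ π)

lemma wgt_perm {n : ℕ} (π : Equiv.Perm (Fin n)) (w : Fin n → Fin 3) : wgt (w ∘ π) = wgt w :=
  Equiv.sum_comp π (fun i => nuW (w i))

lemma ww_perm {n : ℕ} (π : Equiv.Perm (Fin n)) (w : Fin n → Fin 3) : ww (w ∘ π) = ww w :=
  Equiv.prod_comp π (fun i => hw (w i))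

lemma GG_perm {n : ℕ} {g : (Fin n → Fin 3) → ℚ} (hg : g ∈ GG n) (π : Equiv.Perm (Fin n)) :
    pm π g ∈ GG n := by
  refine ⟨fun w hw => hg.1 _ (by rwa [wgt_perm]), ?_⟩
  rw [SetLike.mem_coe, LinearMap.mem_ker]
  ext w
  have h := congrFun (LinearMap.mem_ker.1 hg.2) (w ∘ π)
  rw [opr_apply] at h ⊢
  refine Eq.trans ?_ h
  rw [← Equiv.sum_comp π]
  refine Finset.sum_congr rfl fun j _ => ?_
  simp only [pm, Function.comp_apply]
  rw [Function.update_comp_eq_of_injective _ π.injective]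

lemma ip_perm {n : ℕ} (π : Equiv.Perm (Fin n)) (f g : (Fin n → Fin 3) → ℚ) :
    ip (pm π f) (pm π g) = ip f g := by
  simp only [ip, pm]
  rw [← Equiv.sum_comp (Equiv.arrowCongr π.symm (Equiv.refl (Fin 3)))
    (fun w => ww w * f w * g w)]
  refine Finset.sum_congr rfl fun w _ => ?_
  have : (Equiv.arrowCongr π.symm (Equiv.refl (Fin 3))) w = w ∘ π := by
    ext i; simp [Equiv.arrowCongr]
  rw [this, ww_perm]

lemma pm_FT (κ : sl2 →ₗ[ℚ] sl2 →ₗ[ℚ] ℚ) {n : ℕ} (π : Equiv.Perm (Fin n)) (l : List (Fin n)) :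
    pm π (FT κ l) = FT κ (l.map π) := by
  ext w
  simp [pm, FT, Function.comp_def]

def Orth (κ : sl2 →ₗ[ℚ] sl2 →ₗ[ℚ] ℚ) {n : ℕ} (g : (Fin n → Fin 3) → ℚ) : Prop :=
  ∀ l : List (Fin n), l.Perm (List.finRange n) → ip g (FT κ l) = 0

lemma Orth_perm (κ : sl2 →ₗ[ℚ] sl2 →ₗ[ℚ] ℚ) {n : ℕ} {g : (Fin n → Fin 3) → ℚ}
    (hg : Orth κ g) (π : Equiv.Perm (Fin n)) : Orth κ (pm π g) := by
  intro l hl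
  have h1 := hg (l.map π.symm) ((hl.map _).trans (Equiv.Perm.map_finRange_perm π.symm))
  rw [← ip_perm π, pm_FT, List.map_map] at h1
  simpa using h1

def cG : Fin 3 → ℚ := ![1/2, 1, 1/2]
def c1 : Fin 3 → Fin 3 := ![1, 0, 2]
def c2 : Fin 3 → Fin 3 := ![0, 2, 1]

def CC {k : ℕ} (g : (Fin (k+2) → Fin 3) → ℚ) : (Fin (k+1) → Fin 3) → ℚ := fun v =>
  cG (v 0) * (g (Fin.cons (c1 (v 0)) (Fin.cons (c2 (v 0)) (Fin.tail v)))
    - g (Fin.cons (c2 (v 0)) (Fin.cons (c1 (v 0)) (Fin.tail v))))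

lemma CC_cons {k : ℕ} (g : (Fin (k+2) → Fin 3) → ℚ) (a : Fin 3) (r : Fin k → Fin 3) :
    CC g (Fin.cons a r) = cG a * (g (Fin.cons (c1 a) (Fin.cons (c2 a) r))
    - g (Fin.cons (c2 a) (Fin.cons (c1 a) r))) := by
  simp [CC]

lemma CC_swap {k : ℕ} (g : (Fin (k+2) → Fin 3) → ℚ) (a b : Fin 3) (r : Fin k → Fin 3) :
    g (Fin.cons a (Fin.cons b r)) - g (Fin.cons b (Fin.cons a r))
      = sB a b * CC g (Fin.cons (mB a b) r) := by
  rw [CC_cons]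
  fin_cases a <;> fin_cases b <;> simp [sB, mB, cG, c1, c2]

lemma CC_mem {k : ℕ} {g : (Fin (k+2) → Fin 3) → ℚ} (hg : g ∈ GG (k+2)) : CC g ∈ GG (k+1) := by
  constructor
  · intro v hv
    induction v using Fin.consCases with
    | _ a r =>
    rw [wgt_cons] at hv
    rw [CC_cons, hg.1, hg.1, sub_zero, mul_zero]
    · rw [wgt_cons, wgt_cons]
      fin_cases a <;> simp [c1, c2] at * <;> omega
    · rw [wgt_cons, wgt_cons]
      fin_cases a <;> simp [c1, c2] at * <;> omega
  · rw [SetLike.mem_coe, LinearMap.mem_ker]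
    ext v
    induction v using Fin.consCases with
    | _ a r =>
    have hE : ∀ x y, eA x * g (Fin.cons (eP x) (Fin.cons y r))
        + (eA y * g (Fin.cons x (Fin.cons (eP y) r))
        + opE (fun r => g (Fin.cons x (Fin.cons y r))) r) = 0 := by
      intro x y
      have h := congrFun (LinearMap.mem_ker.1 hg.2) (Fin.cons x (Fin.cons y r))
      rw [opr_cons, opr_cons] at h
      exact h
    rw [opr_cons]
    have h2 : opE (fun r => CC g (Fin.cons a r)) r = cG a *
        (opE (fun r => g (Fin.cons (c1 a) (Fin.cons (c2 a) r))) r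
        - opE (fun r => g (Fin.cons (c2 a) (Fin.cons (c1 a) r))) r) := by
      have : (fun r => CC g (Fin.cons a r)) = cG a •
        ((fun r => g (Fin.cons (c1 a) (Fin.cons (c2 a) r)))
          - (fun r => g (Fin.cons (c2 a) (Fin.cons (c1 a) r)))) := by
        ext r; rw [CC_cons]; rfl
      rw [this, map_smul, map_sub]; rfl
    rw [h2, CC_cons, Pi.zero_apply]
    have h3 := hE (c1 a) (c2 a)
    have h4 := hE (c2 a) (c1 a)
    fin_cases a <;> simp [c1, c2, cG] at * <;> linarith

def UU {k : ℕ} (f : (Fin (k+1) → Fin 3) → ℚ) : (Fin (k+2) → Fin 3) → ℚ := fun w =>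
  sB (w 0) (w 1) * f (Fin.cons (mB (w 0) (w 1)) (Fin.tail (Fin.tail w)))

lemma UU_cons {k : ℕ} (f : (Fin (k+1) → Fin 3) → ℚ) (a b : Fin 3) (r : Fin k → Fin 3) :
    UU f (Fin.cons a (Fin.cons b r)) = sB a b * f (Fin.cons (mB a b) r) := by
  have : (Fin.cons a (Fin.cons b r : Fin (k+1) → Fin 3) : Fin (k+2) → Fin 3) 1 = b := rfl
  simp [UU, this]

lemma CC_ip {k : ℕ} (g : (Fin (k+2) → Fin 3) → ℚ) (f : (Fin (k+1) → Fin 3) → ℚ) :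
    ip g (UU f) = 2 * ip (CC g) f := by
  simp only [ip, sum_cons, ww_cons, UU_cons, CC_cons]
  simp only [Fin.sum_univ_three, Finset.mul_sum, ← Finset.sum_add_distrib]
  refine Finset.sum_congr rfl fun r _ => ?_
  simp [sB, mB, cG, c1, c2]
  ring

lemma FT_split (κ : sl2 →ₗ[ℚ] sl2 →ₗ[ℚ] ℚ) {k : ℕ} (l1 l2 : List (Fin (k+1)))
    (h1 : (0 : Fin (k+1)) ∉ l1) (h2 : (0 : Fin (k+1)) ∉ l2) (a b : Fin 3) (r : Fin k → Fin 3) :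
    UU (FT κ (l1 ++ 0 :: l2)) (Fin.cons a (Fin.cons b r)) =
      val κ ((l1.map Fin.succ).map (fun i => bb
        ((Fin.cons a (Fin.cons b r : Fin (k+1) → Fin 3) : Fin (k+2) → Fin 3) i)) ++
        ⁅bb a, bb b⁆ :: (l2.map Fin.succ).map (fun i => bb
        ((Fin.cons a (Fin.cons b r : Fin (k+1) → Fin 3) : Fin (k+2) → Fin 3) i))) := by
  rw [UU_cons, lie_bb, val_smul_mid]
  congr 1
  rw [FT, List.map_append, List.map_cons]
  have : ∀ l : List (Fin (k+1)), (0 : Fin (k+1)) ∉ l →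
      l.map (fun i => bb ((Fin.cons (mB a b) r : Fin (k+1) → Fin 3) i)) =
      (l.map Fin.succ).map (fun i => bb
        ((Fin.cons a (Fin.cons b r : Fin (k+1) → Fin 3) : Fin (k+2) → Fin 3) i)) := by
    intro l hl
    rw [List.map_map]
    refine List.map_congr_left fun i hi => ?_
    obtain ⟨j, rfl⟩ := Fin.exists_succ_eq.2 (show i ≠ 0 by rintro rfl; exact hl hi)
    simp
  rw [this l1 h1, this l2 h2]
  rfl

lemma Orth_CC (κ : sl2 →ₗ[ℚ] sl2 →ₗ[ℚ] ℚ) (hκ : ∀ x y z : sl2, κ ⁅x, y⁆ z = κ x ⁅y, z⁆)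
    {k : ℕ} (hk : 1 ≤ k) {g : (Fin (k+2) → Fin 3) → ℚ} (hg : Orth κ g) : Orth κ (CC g) := by
  intro l hl
  have hnd : l.Nodup := hl.nodup_iff.2 (List.nodup_finRange _)
  have h0 : (0 : Fin (k+1)) ∈ l := hl.mem_iff.2 (List.mem_finRange _)
  obtain ⟨l1, l2, rfl⟩ := List.append_of_mem h0
  have h' := List.nodup_middle.1 hnd
  rw [List.nodup_cons, List.mem_append, not_or] at h'
  have hlen : l1.length + l2.length = k := by
    have := hl.length_eq
    simp at this; omega
  have hp0 : (0 :: (l1.map Fin.succ ++ 1 :: l2.map Fin.succ)).Perm (List.finRange (k+2)) := by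
    rw [List.finRange_succ]
    refine List.Perm.cons _ ?_
    have := hl.map Fin.succ
    simpa using this
  have hp1 : (l1.map Fin.succ ++ 0 :: 1 :: l2.map Fin.succ).Perm (List.finRange (k+2)) :=
    List.perm_middle.trans hp0
  have hp2 : (l1.map Fin.succ ++ 1 :: 0 :: l2.map Fin.succ).Perm (List.finRange (k+2)) :=
    ((List.Perm.swap _ _ _).append_left _).trans hp1
  suffices h : ip g (UU (FT κ (l1 ++ 0 :: l2))) = 0 by
    rw [CC_ip] at h; linarith
  have hc : ∀ (w1 : Fin 3) (w2 : Fin 3) (r : Fin k → Fin 3),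
    (Fin.cons w1 (Fin.cons w2 r : Fin (k+1) → Fin 3) : Fin (k+2) → Fin 3) 1 = w2 :=
      fun _ _ _ => rfl
  by_cases hl1 : l1 = []
  · subst hl1
    have : UU (FT κ ([] ++ 0 :: l2)) = FT κ (([] : List (Fin (k+1))).map Fin.succ ++ 0 :: 1 :: l2.map Fin.succ) := by
      ext w
      induction w using Fin.consCases with
      | _ a w =>
      induction w using Fin.consCases with
      | _ b r =>
      rw [FT_split κ _ _ h'.1.1 h'.1.2, FT]
      simp only [List.map_nil, List.nil_append, val_cons, List.map_cons, Fin.cons_zero, hc]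
      rw [tv_step]
      intro hh
      simp at hh
      subst hh
      simp at hlen; omega
    rw [this]; exact hg _ hp1
  · obtain ⟨c, l1, rfl⟩ := List.exists_cons_of_ne_nil hl1
    by_cases hl2 : l2 = []
    · subst hl2
      have : UU (FT κ ((c :: l1) ++ [0])) = FT κ ((c :: l1).map Fin.succ ++ 0 :: 1 :: ([] : List (Fin (k+1))).map Fin.succ) := by
        ext w
        induction w using Fin.consCases with
        | _ a w =>
        induction w using Fin.consCases with
        | _ b r =>
        rw [FT_split κ _ _ h'.1.1 h'.1.2, FT]
        simp only [List.map_nil, List.cons_append, val_cons, List.map_cons, List.map_append,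
          tv_lie_last κ hκ, Fin.cons_zero, hc]
      rw [this]; exact hg _ hp1
    · have : UU (FT κ ((c :: l1) ++ 0 :: l2)) =
          FT κ ((c :: l1).map Fin.succ ++ 0 :: 1 :: l2.map Fin.succ)
          + (-1 : ℚ) • FT κ ((c :: l1).map Fin.succ ++ 1 :: 0 :: l2.map Fin.succ) := by
        ext w
        induction w using Fin.consCases with
        | _ a w =>
        induction w using Fin.consCases with
        | _ b r =>
        rw [FT_split κ _ _ h'.1.1 h'.1.2, Pi.add_apply, Pi.smul_apply, FT, FT]
        simp only [List.cons_append, val_cons, List.map_cons, List.map_append,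
          Fin.cons_zero, hc]
        rw [tv_lie_mid _ _ _ _ _ (by simpa using hl2)]
        simp [sub_eq_add_neg]
      rw [this, ip_add_right, ip_smul_right, hg _ hp1, hg _ hp2]; simp

/-! ### Symmetric invariants -/

def Sym' {n : ℕ} (g : (Fin n → Fin 3) → ℚ) : Prop := ∀ (π : Equiv.Perm (Fin n)) w, g (w ∘ π) = g w

def cnt {n : ℕ} (c : Fin 3) (w : Fin n → Fin 3) : ℕ := (Finset.univ.filter fun i => w i = c).card

lemma swap_word {n : ℕ} (w : Fin n → Fin 3) (i0 i : Fin n) (x y : Fin 3) (h0 : w i0 = x)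
    (hi : Function.update w i0 y i = y) :
    Function.update (Function.update w i0 y) i x = w ∘ Equiv.swap i i0 := by
  ext j
  rw [Function.comp_apply]
  by_cases hji : j = i
  · subst hji; simp [h0]
  · rw [Function.update_of_ne hji]
    by_cases hj0 : j = i0
    · subst hj0
      rw [Function.update_of_ne (Ne.symm hji)] at hi
      simp [hi]
    · rw [Function.update_of_ne hj0, Equiv.swap_apply_of_ne_of_ne hji hj0]

lemma cnt_lt {n : ℕ} (w : Fin n → Fin 3) (i0 i : Fin n) (x y z : Fin 3) (h0 : w i0 = x)
    (hy : y ≠ x) (hz : z ≠ x) :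
    cnt x (Function.update (Function.update w i0 y) i z) < cnt x w := by
  apply Finset.card_lt_card
  rw [Finset.ssubset_iff_of_subset]
  · refine ⟨i0, by simp [h0], ?_⟩
    simp only [Finset.mem_filter, Finset.mem_univ, true_and]
    by_cases h : i0 = i
    · subst h; simpa using hz
    · rw [Function.update_of_ne h]; simpa using hy
  · intro j
    simp only [Finset.mem_filter, Finset.mem_univ, true_and]
    by_cases h : j = i
    · subst h; intro h; simp at h; exact absurd h hz
    · rw [Function.update_of_ne h]
      by_cases h' : j = i0
      · subst h'; intro _; exact h0
      · rw [Function.update_of_ne h']; exact id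

lemma opE_GG {n : ℕ} {g : (Fin n → Fin 3) → ℚ} (hg : g ∈ GG n) (w : Fin n → Fin 3) :
    ∑ i, eA (w i) * g (Function.update w i (eP (w i))) = 0 :=
  congrFun (LinearMap.mem_ker.1 hg.2) w

lemma sum_ite_zero {n : ℕ} (w : Fin n → Fin 3) (y : Fin 3) (i0 : Fin n) (h0 : w i0 = y) (c : ℚ)
    (h : ∑ i, (if w i = y then c else 0) = 0) : c = 0 := by
  rw [← Finset.sum_filter, Finset.sum_const, nsmul_eq_mul] at h
  rcases mul_eq_zero.1 h with h | h
  · exfalso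
    have : (Finset.univ.filter fun i => w i = y).card = 0 := by exact_mod_cast h
    rw [Finset.card_eq_zero] at this
    have h2 : i0 ∈ (Finset.univ.filter fun i => w i = y) := by simp [h0]
    rw [this] at h2; simp at h2
  · exact h

lemma symZ {n : ℕ} {g : (Fin n → Fin 3) → ℚ} (hg : g ∈ GG n) (hs : Sym' g)
    (h1 : g (fun _ => 1) = 0) : g = 0 := by
  have key : ∀ (m : ℕ) (w : Fin n → Fin 3), cnt 0 w = m → g w = 0 := by
    intro m
    induction m using Nat.strong_induction_on with
    | _ m ih =>
    intro w hw
    by_cases hwt : wgt w = 0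
    swap
    · exact hg.1 w hwt
    by_cases hex : ∃ i0, w i0 = 0
    · obtain ⟨i0, h0⟩ := hex
      have h := opE_GG hg (Function.update w i0 1)
      have e : ∀ i, eA (Function.update w i0 1 i) * g (Function.update (Function.update w i0 1) i
          (eP (Function.update w i0 1 i))) =
          if Function.update w i0 1 i = 1 then -2 * g w else 0 := by
        intro i
        have ha : ∀ a : Fin 3, a = 0 ∨ a = 1 ∨ a = 2 := by decide
        rcases ha (Function.update w i0 1 i) with ha | ha | ha
        · simp [ha]
        · rw [ha]; simp only [eA_1, eP_1, if_true]
          rw [swap_word w i0 i 0 1 h0 ha, hs]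
        · rw [ha]; simp only [eA_2, eP_2]
          rw [ih _ (hw ▸ cnt_lt w i0 i 0 1 1 h0 (by decide) (by decide)) _ rfl]
          simp
      simp only [e] at h
      have := sum_ite_zero _ 1 i0 (by simp) _ h
      linarith
    · push Not at hex
      have : w = fun _ => 1 := by
        rw [wgt, Finset.sum_eq_zero_iff_of_nonpos] at hwt
        · ext i
          have h2 := hwt i (Finset.mem_univ _)
          have h3 := hex i
          generalize w i = a at *
          fin_cases a <;> simp at *
        · intro i _
          have h3 := hex i
          generalize w i = a at *
          fin_cases a <;> simp at *
      rw [this, h1]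
  ext w
  exact key _ w rfl

lemma symO {n : ℕ} (hn : Odd n) {g : (Fin n → Fin 3) → ℚ} (hg : g ∈ GG n) (hs : Sym' g) :
    g = 0 := by
  have key : ∀ (m : ℕ) (w : Fin n → Fin 3), cnt 1 w = m → g w = 0 := by
    intro m
    induction m using Nat.strong_induction_on with
    | _ m ih =>
    intro w hw
    by_cases hwt : wgt w = 0
    swap
    · exact hg.1 w hwt
    by_cases hex : ∃ i0, w i0 = 1
    · obtain ⟨i0, h0⟩ := hex
      have h := opE_GG hg (Function.update w i0 2)
      have e : ∀ i, eA (Function.update w i0 2 i) * g (Function.update (Function.update w i0 2) i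
          (eP (Function.update w i0 2 i))) =
          if Function.update w i0 2 i = 2 then g w else 0 := by
        intro i
        have ha : ∀ a : Fin 3, a = 0 ∨ a = 1 ∨ a = 2 := by decide
        rcases ha (Function.update w i0 2 i) with ha | ha | ha
        · simp [ha]
        · rw [ha]; simp only [eA_1, eP_1]
          rw [ih _ (hw ▸ cnt_lt w i0 i 1 2 0 h0 (by decide) (by decide)) _ rfl]
          simp
        · rw [ha]; simp only [eA_2, eP_2, if_true, one_mul]
          rw [swap_word w i0 i 1 2 h0 ha, hs]
      simp only [e] at h
      exact sum_ite_zero _ 2 i0 (by simp) _ h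
    · push Not at hex
      exfalso
      have h2 : ∃ z : ℤ, wgt w = n + 2 * z := by
        refine ⟨∑ i, (if w i = 0 then 0 else -1), ?_⟩
        rw [wgt, Finset.mul_sum]
        have : (n : ℤ) = ∑ i : Fin n, (1 : ℤ) := by simp
        rw [this, ← Finset.sum_add_distrib]
        refine Finset.sum_congr rfl fun i _ => ?_
        have h3 := hex i
        generalize w i = a at *
        fin_cases a <;> simp at *
      obtain ⟨z, hz⟩ := h2
      obtain ⟨y, hy⟩ := hn
      omega
  ext w
  exact key _ w rfl

lemma cons_one {k : ℕ} : (Fin.cons 1 (fun _ => 1) : Fin (k+1) → Fin 3) = fun _ => 1 := by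
  ext i; refine Fin.cases ?_ (fun j => ?_) i <;> simp

lemma cons_swap01 {k : ℕ} (a b : Fin 3) (r : Fin k → Fin 3) :
    (Fin.cons a (Fin.cons b r : Fin (k+1) → Fin 3) : Fin (k+2) → Fin 3) ∘ Equiv.swap 0 1
      = Fin.cons b (Fin.cons a r : Fin (k+1) → Fin 3) := by
  funext i
  rw [Function.comp_apply]
  refine Fin.cases ?_ (fun j => Fin.cases ?_ (fun m => ?_) j) i
  · simp
  · show _ = a
    rw [show Fin.succ (0 : Fin (k+1)) = 1 from rfl, Equiv.swap_apply_right]; rfl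
  · rw [Equiv.swap_apply_of_ne_of_ne]
    · rfl
    · exact Fin.succ_ne_zero _
    · rw [show (1 : Fin (k+2)) = Fin.succ (0 : Fin (k+1)) from rfl, Ne, Fin.succ_inj]
      exact Fin.succ_ne_zero _

lemma cons_swap12 {k : ℕ} (a b c : Fin 3) (r : Fin k → Fin 3) :
    (Fin.cons a (Fin.cons b (Fin.cons c r : Fin (k+1) → Fin 3) : Fin (k+2) → Fin 3)
      : Fin (k+3) → Fin 3) ∘ Equiv.swap 1 2
      = Fin.cons a (Fin.cons c (Fin.cons b r : Fin (k+1) → Fin 3) : Fin (k+2) → Fin 3) := by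
  rw [← cons_swap01 b c r]
  funext i
  rw [Function.comp_apply]
  refine Fin.cases ?_ (fun j => ?_) i
  · rw [Equiv.swap_apply_of_ne_of_ne]
    · rfl
    · exact (Fin.succ_ne_zero (0 : Fin (k+2))).symm
    · exact (Fin.succ_ne_zero (1 : Fin (k+2))).symm
  · rw [Fin.cons_succ, Function.comp_apply]
    have : Equiv.swap (1 : Fin (k+3)) 2 j.succ = (Equiv.swap 0 1 j).succ := by
      have := (Fin.succ_injective (k+2)).swap_apply 0 1 j
      rw [← this]; rfl
    rw [this, Fin.cons_succ]

lemma symEF {k : ℕ} {f : (Fin (k+2) → Fin 3) → ℚ} (hf : f ∈ GG (k+2)) (hs : Sym' f) :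
    2 * ((k : ℚ) + 1) * f (Fin.cons 0 (Fin.cons 2 fun _ => 1)) = f (fun _ => 1) ∧
    2 * ((k : ℚ) + 1) * f (Fin.cons 2 (Fin.cons 0 fun _ => 1)) = f (fun _ => 1) := by
  have h02 : f (Fin.cons 0 (Fin.cons 2 fun _ => 1)) = f (Fin.cons 2 (Fin.cons 0 fun _ => 1)) := by
    rw [← cons_swap01, hs]
  rw [h02, and_self]
  have h := opE_GG hf (Fin.cons 2 (fun _ => 1))
  rw [Fin.sum_univ_succ] at h
  have e : ∀ i : Fin (k+1), f (Function.update (Fin.cons 2 (fun _ => 1) : Fin (k+2) → Fin 3) i.succ 0)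
      = f (Fin.cons 2 (Fin.cons 0 fun _ => 1)) := by
    intro i
    have hc : (Fin.cons 2 (fun _ => 1) : Fin (k+2) → Fin 3)
        = Function.update (Fin.cons 2 (Fin.cons 0 fun _ => 1)) 1 1 := by
      rw [show (1 : Fin (k+2)) = Fin.succ (0 : Fin (k+1)) from rfl, ← Fin.cons_update,
        Fin.update_cons_zero, cons_one]
    have h1 := swap_word (Fin.cons 2 (Fin.cons 0 fun _ => 1) : Fin (k+2) → Fin 3) 1 i.succ 0 1 rfl
      (by rw [← hc, Fin.cons_succ])
    rw [hc, h1, hs]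
  simp only [Fin.cons_zero, Fin.cons_succ, eA_2, eP_2, eA_1, eP_1, e, Fin.update_cons_zero,
    cons_one, Finset.sum_const, Finset.card_univ, Fintype.card_fin, nsmul_eq_mul] at h
  push_cast at h
  linarith

/-! ### The main induction -/

lemma nine {k : ℕ} {h : (Fin (k+3) → Fin 3) → ℚ} (hC : CC h ∈ GG (k+2)) (hs : Sym' (CC h)) :
    h (Fin.cons 0 (Fin.cons 2 (Fin.cons 1 fun _ => 1)))
      - h (Fin.cons 2 (Fin.cons 0 (Fin.cons 1 fun _ => 1))) = CC h (fun _ => 1) ∧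
    ((k : ℚ) + 1) * (h (Fin.cons 1 (Fin.cons 0 (Fin.cons 2 fun _ => 1)))
      - h (Fin.cons 0 (Fin.cons 1 (Fin.cons 2 fun _ => 1)))) = CC h (fun _ => 1) ∧
    ((k : ℚ) + 1) * (h (Fin.cons 2 (Fin.cons 1 (Fin.cons 0 fun _ => 1)))
      - h (Fin.cons 1 (Fin.cons 2 (Fin.cons 0 fun _ => 1)))) = CC h (fun _ => 1) := by
  obtain ⟨h1, h2⟩ := symEF hC hs
  rw [CC_swap, CC_swap, CC_swap]
  have s1 : sB 0 2 = 1 := rfl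
  have s2 : sB 1 0 = 2 := rfl
  have s3 : sB 2 1 = 2 := rfl
  have m1 : mB 0 2 = 1 := rfl
  have m2 : mB 1 0 = 0 := rfl
  have m3 : mB 2 1 = 2 := rfl
  rw [s1, s2, s3, m1, m2, m3, cons_one, cons_one]
  refine ⟨by ring, by linarith, by linarith⟩

lemma elim (b c c' c'' x012 x021 x102 x120 x201 x210 : ℚ) (hb : 2 ≤ b)
    (a1 : x021 - x201 = c) (a2 : b * (x102 - x012) = c) (a3 : b * (x210 - x120) = c)
    (b1 : x012 - x210 = c') (b2 : b * (x120 - x021) = c') (b3 : b * (x201 - x102) = c')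
    (d1 : x102 - x120 = c'') (d2 : b * (x210 - x201) = c'') (d3 : b * (x021 - x012) = c'') :
    c = 0 := by
  have hb0 : b ≠ 0 := by linarith
  obtain ⟨u, hu⟩ : ∃ u, u = x102 - x012 := ⟨_, rfl⟩
  obtain ⟨v, hv⟩ : ∃ u, u = x120 - x021 := ⟨_, rfl⟩
  obtain ⟨t, ht⟩ : ∃ u, u = x210 - x201 := ⟨_, rfl⟩
  rw [← hu] at a2
  rw [← hv] at b2
  rw [← ht] at d2
  have q1 : x201 - x102 = v := mul_left_cancel₀ hb0 (b3.trans b2.symm)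
  have q2 : x021 - x012 = t := mul_left_cancel₀ hb0 (d3.trans d2.symm)
  have e1 : t - u - v = b * u := by linarith
  have e2 : -(u + v + t) = b * v := by linarith
  have e3 : u - t - v = b * t := by linarith
  have hv0 : v = 0 := by
    have : (b + 2) * (b - 1) * v = 0 := by linear_combination (e1 + e3) - b * e2
    rcases mul_eq_zero.1 this with h | h
    · exfalso
      rcases mul_eq_zero.1 h with h | h <;> linarith
    · exact h
  have hu0 : u = 0 := by
    have : (b + 2) * u = 0 := by
      rw [hv0] at e1 e2
      linear_combination (-1) * e1 - e2
    rcases mul_eq_zero.1 this with h | h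
    · exfalso; linarith
    · exact h
  rw [← a2, hu0, mul_zero]

lemma main_ind (κ : sl2 →ₗ[ℚ] sl2 →ₗ[ℚ] ℚ) (hκ : ∀ x y z : sl2, κ ⁅x, y⁆ z = κ x ⁅y, z⁆)
    (hkap : ∀ x y : sl2,
      κ x y = x.1 0 1 * y.1 1 0 + 2 * (x.1 0 0 * y.1 0 0) + x.1 1 0 * y.1 0 1) :
    ∀ (k : ℕ) (g : (Fin (k+2) → Fin 3) → ℚ), g ∈ GG (k+2) → Orth κ g →
      Sym' g ∧ (k = 0 → g (fun _ => 1) = 0) := by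
  intro k
  induction k with
  | zero =>
    intro g hg ho
    have h1 := ho [0, 1] (by decide)
    have hF : ∀ a b (r : Fin 0 → Fin 3), FT κ [0, 1] (Fin.cons a (Fin.cons b r) : Fin 2 → Fin 3)
        = κ (bb a) (bb b) := by
      intro a b r; rw [FT]
      simp only [List.map_cons, List.map_nil, val_cons, tv]
      rfl
    have h2 := opE_GG hg (Fin.cons 2 (Fin.cons 1 Fin.elim0))
    have h3 := opE_GG hg (Fin.cons 1 (Fin.cons 2 Fin.elim0))
    rw [← opr_apply, opr_cons, opr_cons, opr_apply] at h2 h3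
    simp at h2 h3
    have hg1 : g (Fin.cons 1 (Fin.cons 1 Fin.elim0)) = 0 := by
      simp only [ip, sum_cons, ww_cons, hF, Fin.sum_univ_three, hkap] at h1
      have hu : ∀ r : Fin 0 → Fin 3, r = Fin.elim0 := fun r => Subsingleton.elim _ _
      simp [ww, E, H, F, hu] at h1
      linarith
    have hc : (fun _ => 1 : Fin (0+2) → Fin 3) = Fin.cons 1 (Fin.cons 1 Fin.elim0) := by
      decide
    have hz : g = 0 := by
      ext w
      induction w using Fin.consCases with
      | _ a w =>
      induction w using Fin.consCases with
      | _ b r =>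
      rw [show r = Fin.elim0 from Subsingleton.elim _ _]
      by_cases hw : wgt (Fin.cons a (Fin.cons b Fin.elim0 : Fin 1 → Fin 3) : Fin 2 → Fin 3) = 0
      · rw [wgt_cons, wgt_cons] at hw
        fin_cases a <;> fin_cases b <;> simp [wgt] at * <;> linarith
      · exact hg.1 _ hw
    subst hz
    exact ⟨fun _ _ => rfl, fun _ => rfl⟩
  | succ k ih =>
    intro g hg ho
    have hCs : ∀ h : (Fin (k+3) → Fin 3) → ℚ, h ∈ GG (k+3) → Orth κ h →
        CC h ∈ GG (k+2) ∧ Sym' (CC h) ∧ (k = 0 → CC h (fun _ => 1) = 0) := by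
      intro h h1 h2
      exact ⟨CC_mem h1, ih _ (CC_mem h1) (Orth_CC κ hκ (by omega) h2)⟩
    have hC0 : ∀ h : (Fin (k+3) → Fin 3) → ℚ, h ∈ GG (k+3) → Orth κ h → CC h = 0 := by
      intro h h1 h2
      obtain ⟨c1, c2, c3⟩ := hCs h h1 h2
      rcases Nat.even_or_odd (k+2) with hev | hodd
      · refine symZ c1 c2 ?_
        by_cases hk : k = 0
        · exact c3 hk
        · have hk2 : (2 : ℚ) ≤ (k : ℚ) + 1 := by
            have : 1 ≤ k := by omega
            have : (1 : ℚ) ≤ k := by exact_mod_cast this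
            linarith
          obtain ⟨a1, a2, a3⟩ := nine c1 c2
          obtain ⟨d1, d2, -⟩ := hCs _ (GG_perm h1 (Equiv.swap 1 2)) (Orth_perm κ h2 (Equiv.swap 1 2))
          obtain ⟨b1, b2, b3⟩ := nine d1 d2
          have h1' := GG_perm h1 (Equiv.swap 0 1)
          have h2' := Orth_perm κ h2 (Equiv.swap 0 1)
          obtain ⟨f1, f2, -⟩ := hCs _ (GG_perm h1' (Equiv.swap 1 2)) (Orth_perm κ h2' (Equiv.swap 1 2))
          obtain ⟨g1, g2, g3⟩ := nine f1 f2
          simp only [pm, cons_swap12, cons_swap01] at b1 b2 b3 g1 g2 g3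
          exact elim _ _ _ _ _ _ _ _ _ _ hk2 a1 a2 a3 b1 b2 b3 g1 g2 g3
      · exact symO hodd c1 c2
    have hsw : ∀ (π : Equiv.Perm (Fin (k+3))) (w : Fin (k+3) → Fin 3),
        g ((w ∘ Equiv.swap 0 1) ∘ π) = g (w ∘ π) := by
      intro π w
      have h0 := hC0 _ (GG_perm hg π) (Orth_perm κ ho π)
      induction w using Fin.consCases with
      | _ a w =>
      induction w using Fin.consCases with
      | _ b r =>
      have := CC_swap (pm π g) a b r
      rw [h0, Pi.zero_apply, mul_zero, sub_eq_zero] at this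
      rw [cons_swap01]
      exact this.symm
    refine ⟨?_, by omega⟩
    intro σ
    induction σ using Equiv.Perm.swap_induction_on with
    | one => intro w; rfl
    | swap_mul σ i j hij ihσ =>
      intro w
      have : w ∘ ⇑(Equiv.swap i j * σ) = (w ∘ Equiv.swap i j) ∘ σ := rfl
      rw [this, ihσ]
      obtain ⟨π, hπ⟩ := isConj_iff.1 (Equiv.Perm.isConj_swap (α := Fin (k+3)) hij
        (show (0 : Fin (k+3)) ≠ 1 from (Fin.succ_ne_zero 0).symm))
      have e1 : Equiv.swap i j = π⁻¹ * (Equiv.swap 0 1 * π) := by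
        rw [← hπ]; group
      rw [e1]
      have e2 : w ∘ ⇑(π⁻¹ * (Equiv.swap 0 1 * π) : Equiv.Perm (Fin (k+3))) = ((w ∘ ⇑π⁻¹) ∘ Equiv.swap 0 1) ∘ π := rfl
      rw [e2, hsw]
      congr 1
      ext i; simp

/-! ### Existence of the symmetric invariant -/

lemma cnt_eq {n : ℕ} (c : Fin 3) (w : Fin n → Fin 3) :
    cnt c w = ∑ i, if w i = c then 1 else 0 := by
  rw [cnt, Finset.card_filter]

lemma cnt_perm {n : ℕ} (c : Fin 3) (w : Fin n → Fin 3) (π : Equiv.Perm (Fin n)) :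
    cnt c (w ∘ π) = cnt c w := by
  rw [cnt_eq, cnt_eq]
  exact Equiv.sum_comp π (fun i => if w i = c then 1 else 0)

lemma cnt_total {n : ℕ} (w : Fin n → Fin 3) : cnt 0 w + cnt 1 w + cnt 2 w = n := by
  rw [cnt_eq, cnt_eq, cnt_eq, ← Finset.sum_add_distrib, ← Finset.sum_add_distrib]
  have : n = ∑ i : Fin n, 1 := by simp
  conv_rhs => rw [this]
  refine Finset.sum_congr rfl fun i _ => ?_
  generalize w i = a
  fin_cases a <;> rfl

lemma cnt_wgt {n : ℕ} (w : Fin n → Fin 3) : wgt w = (cnt 0 w : ℤ) - cnt 2 w := by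
  rw [cnt_eq, cnt_eq, wgt]
  push_cast
  rw [← Finset.sum_sub_distrib]
  refine Finset.sum_congr rfl fun i _ => ?_
  generalize w i = a
  fin_cases a <;> rfl

lemma cnt_up1 {n : ℕ} (w : Fin n → Fin 3) (i : Fin n) (h : w i ≠ 0) :
    cnt 0 (Function.update w i 1) = cnt 0 w := by
  rw [cnt, cnt]; congr 1; ext j
  by_cases hj : j = i
  · subst hj; simp [h]
  · simp [hj]

lemma cnt_up0 {n : ℕ} (w : Fin n → Fin 3) (i : Fin n) (h : w i ≠ 0) :
    cnt 0 (Function.update w i 0) = cnt 0 w + 1 := by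
  rw [cnt, cnt, ← Finset.card_insert_of_notMem (a := i) (by simp [h])]
  congr 1; ext j
  by_cases hj : j = i
  · subst hj; simp
  · simp [hj]

def phi (m a : ℕ) : ℚ := (a.factorial : ℚ) * (2 * (m - a)).factorial / (m - a).factorial

lemma phi_step (a d : ℕ) :
    ((a : ℚ) + 1) * phi (a + d + 1) a = 2 * (2 * d + 1) * phi (a + d + 1) (a + 1) := by
  rw [phi, phi, show a + d + 1 - a = d + 1 by omega, show a + d + 1 - (a + 1) = d by omega,
    show 2 * (d + 1) = 2 * d + 1 + 1 by ring]
  simp only [Nat.factorial_succ]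
  have h : (d.factorial : ℚ) ≠ 0 := by exact_mod_cast d.factorial_ne_zero
  have h2 : (d : ℚ) + 1 ≠ 0 := by positivity
  push_cast
  field_simp
  ring

def SS (m : ℕ) : (Fin (2 * m) → Fin 3) → ℚ := fun w => if wgt w = 0 then phi m (cnt 0 w) else 0

lemma SS_sym (m : ℕ) : Sym' (SS m) := by
  intro π w
  rw [SS, wgt_perm, cnt_perm, SS]

lemma SS_one (m : ℕ) : SS m (fun _ => 1) ≠ 0 := by
  have h : wgt (fun _ => 1 : Fin (2 * m) → Fin 3) = 0 := by
    rw [wgt]; exact Finset.sum_eq_zero fun _ _ => rfl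
  have h2 : cnt 0 (fun _ => 1 : Fin (2 * m) → Fin 3) = 0 := by simp [cnt]
  rw [SS, if_pos h, h2, phi]
  positivity

lemma SS_mem (m : ℕ) : SS m ∈ GG (2 * m) := by
  refine ⟨fun w hw => by rw [SS, if_neg hw], ?_⟩
  rw [SetLike.mem_coe, LinearMap.mem_ker]
  ext w
  rw [opr_apply, Pi.zero_apply]
  have ha : ∀ a : Fin 3, a = 0 ∨ a = 1 ∨ a = 2 := by decide
  by_cases hw : wgt w = -1
  · have e : ∀ i, eA (w i) * SS m (Function.update w i (eP (w i)))
        = (if w i = 1 then -2 * phi m (cnt 0 w + 1) else 0)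
          + (if w i = 2 then phi m (cnt 0 w) else 0) := by
      intro i
      rcases ha (w i) with h | h | h
      · simp [h]
      · have hn : nuW 1 = 0 := rfl
        have hn0 : nuW 0 = 1 := rfl
        simp only [h, eA_1, eP_1, SS]
        rw [wgt_update, hw, cnt_up0 w i (by rw [h]; decide), h, hn, hn0]
        simp
      · have hn : nuW 1 = 0 := rfl
        have hn0 : nuW 2 = -1 := rfl
        simp only [h, eA_2, eP_2, SS]
        rw [wgt_update, hw, cnt_up1 w i (by rw [h]; decide), h, hn, hn0]
        simp
    simp only [e]
    rw [Finset.sum_add_distrib, ← Finset.sum_filter, ← Finset.sum_filter, Finset.sum_const,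
      Finset.sum_const, nsmul_eq_mul, nsmul_eq_mul]
    change (cnt 1 w : ℚ) * _ + (cnt 2 w : ℚ) * _ = 0
    have t1 := cnt_total w
    have t2 := cnt_wgt w
    rw [hw] at t2
    obtain ⟨d, hd⟩ : ∃ d, m = cnt 0 w + d + 1 := ⟨m - cnt 0 w - 1, by omega⟩
    have t3 : cnt 1 w = 2 * d + 1 := by omega
    have t4 : cnt 2 w = cnt 0 w + 1 := by omega
    have := phi_step (cnt 0 w) d
    rw [← hd] at this
    rw [t3, t4]
    push_cast
    linear_combination this
  · refine Finset.sum_eq_zero fun i _ => ?_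
    rcases ha (w i) with h | h | h
    · simp [h]
    · have hn : nuW 1 = 0 := rfl
      have hn0 : nuW 0 = 1 := rfl
      simp only [h, eA_1, eP_1, SS]
      rw [wgt_update, h, hn, hn0, if_neg (by omega), mul_zero]
    · have hn : nuW 1 = 0 := rfl
      have hn0 : nuW 2 = -1 := rfl
      simp only [h, eA_2, eP_2, SS]
      rw [wgt_update, h, hn, hn0, if_neg (by omega), mul_zero]

/-! ### Dimension of the span -/

def ipB (n : ℕ) : LinearMap.BilinForm ℚ ((Fin n → Fin 3) → ℚ) :=
  LinearMap.mk₂ ℚ ip ip_add_left ip_smul_left ip_add_right ip_smul_right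

lemma ipB_refl (n : ℕ) : (ipB n).IsRefl := by
  intro x y h
  change ip y x = 0
  rw [ip_comm]; exact h

lemma dim_split {n : ℕ} (W : Submodule ℚ ((Fin n → Fin 3) → ℚ)) (hW : W ≤ GG n) :
    Module.finrank ℚ W + Module.finrank ℚ (GG n ⊓ (ipB n).orthogonal W : Submodule ℚ _)
      = Module.finrank ℚ (GG n) := by
  have hnd : ((ipB n).restrict W).Nondegenerate := by
    refine (LinearMap.IsRefl.nondegenerate_iff_separatingLeft ?_).2 ?_
    · intro x y h
      exact ipB_refl n _ _ h
    · intro x hx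
      have := hx x
      exact Subtype.ext (ip_self_eq_zero this)
  have hc := LinearMap.BilinForm.isCompl_orthogonal_of_restrict_nondegenerate (ipB_refl n) hnd
  have h1 : W ⊔ (GG n ⊓ (ipB n).orthogonal W) = GG n := by
    rw [inf_comm, ← sup_inf_assoc_of_le _ hW, hc.sup_eq_top, top_inf_eq]
  have h2 : W ⊓ (GG n ⊓ (ipB n).orthogonal W) = ⊥ := by
    rw [← inf_assoc, inf_comm W, inf_assoc, hc.inf_eq_bot, inf_bot_eq]
  have := Submodule.finrank_sup_add_finrank_inf_eq W (GG n ⊓ (ipB n).orthogonal W)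
  rw [h1, h2, finrank_bot] at this
  omega

def WW (κ : sl2 →ₗ[ℚ] sl2 →ₗ[ℚ] ℚ) (n : ℕ) : Submodule ℚ ((Fin n → Fin 3) → ℚ) :=
  Submodule.span ℚ (Set.range fun σ : Equiv.Perm (Fin n) => FT κ (List.ofFn σ))

lemma ofFn_perm {n : ℕ} (σ : Equiv.Perm (Fin n)) : (List.ofFn σ).Perm (List.finRange n) := by
  rw [List.ofFn_eq_map]; exact Equiv.Perm.map_finRange_perm σ

lemma exists_ofFn {n : ℕ} (l : List (Fin n)) (hl : l.Perm (List.finRange n)) :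
    ∃ σ : Equiv.Perm (Fin n), l = List.ofFn σ := by
  have hlen : l.length = n := by rw [hl.length_eq, List.length_finRange]
  have hnd : l.Nodup := hl.nodup_iff.2 (List.nodup_finRange n)
  let f : Fin n → Fin n := fun i => l.get (i.cast hlen.symm)
  have hf : Function.Injective f := by
    intro i j h
    have := List.nodup_iff_injective_get.1 hnd h
    exact Fin.cast_injective _ this
  refine ⟨Equiv.ofBijective f (Finite.injective_iff_bijective.1 hf), ?_⟩
  apply List.ext_get
  · simp [hlen]
  · intro i h1 h2
    simp [f]

lemma WW_le (κ : sl2 →ₗ[ℚ] sl2 →ₗ[ℚ] ℚ) (hκ : ∀ x y z : sl2, κ ⁅x, y⁆ z = κ x ⁅y, z⁆) (n : ℕ) :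
    WW κ n ≤ GG n := by
  rw [WW, Submodule.span_le]
  rintro _ ⟨σ, rfl⟩
  exact FT_mem κ hκ _ (ofFn_perm σ)

lemma mem_orth (κ : sl2 →ₗ[ℚ] sl2 →ₗ[ℚ] ℚ) {n : ℕ} (g : (Fin n → Fin 3) → ℚ) :
    g ∈ (ipB n).orthogonal (WW κ n) ↔ Orth κ g := by
  constructor
  · intro h l hl
    obtain ⟨σ, rfl⟩ := exists_ofFn l hl
    rw [ip_comm]
    exact h _ (Submodule.subset_span ⟨σ, rfl⟩)
  · intro h x hx
    change ip x g = 0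
    rw [ip_comm]
    induction hx using Submodule.span_induction with
    | mem x hx => obtain ⟨σ, rfl⟩ := hx; exact h _ (ofFn_perm σ)
    | zero => simp [ip]
    | add x y _ _ h1 h2 => rw [ip_add_right, h1, h2, add_zero]
    | smul c x _ h1 => rw [ip_smul_right, h1, mul_zero]

lemma tv_neg (κ : sl2 →ₗ[ℚ] sl2 →ₗ[ℚ] ℚ) (l : List sl2) : ∀ a, tv κ (-a) l = - tv κ a l := by
  induction l with
  | nil => intro a; simp [tv]
  | cons y l ih =>
    intro a
    cases l with
    | nil => simp [tv]
    | cons z l => simp only [tv, neg_lie]; exact ih _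

lemma Sym_orth (κ : sl2 →ₗ[ℚ] sl2 →ₗ[ℚ] ℚ) {n : ℕ} (hn : 3 ≤ n) {g : (Fin n → Fin 3) → ℚ}
    (hs : Sym' g) : Orth κ g := by
  intro l hl
  have hlen : l.length = n := by rw [hl.length_eq, List.length_finRange]
  have hnd : l.Nodup := hl.nodup_iff.2 (List.nodup_finRange n)
  match l, hlen, hnd, hl with
  | [], h, _, _ => simp at h; omega
  | [_], h, _, _ => simp at h; omega
  | [_, _], h, _, _ => simp at h; omega
  | a :: b :: c :: l, _, hnd, hl =>
    have hg : pm (Equiv.swap a b) g = g := by ext w; exact hs _ w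
    have h1 := ip_perm (Equiv.swap a b) g (FT κ (a :: b :: c :: l))
    rw [hg, pm_FT] at h1
    have h2 : (a :: b :: c :: l).map (Equiv.swap a b) = b :: a :: c :: l := by
      simp only [List.map_cons, Equiv.swap_apply_left, Equiv.swap_apply_right]
      have : ∀ x ∈ c :: l, Equiv.swap a b x = x := by
        intro x hx
        simp only [List.nodup_cons] at hnd
        refine Equiv.swap_apply_of_ne_of_ne ?_ ?_
        · rintro rfl; exact hnd.1 (List.mem_cons_of_mem _ hx)
        · rintro rfl; exact hnd.2.1 hx
      have h3 : (c :: l).map (Equiv.swap a b) = c :: l := by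
        conv_rhs => rw [← List.map_id (c :: l)]
        exact List.map_congr_left this
      rw [← List.map_cons, h3]
    have h4 : FT κ (b :: a :: c :: l) = (-1 : ℚ) • FT κ (a :: b :: c :: l) := by
      ext w
      simp only [FT, List.map_cons, val_cons, tv, Pi.smul_apply, smul_eq_mul]
      rw [← lie_skew, tv_neg]
      ring
    rw [h2, h4, ip_smul_right] at h1
    linarith

lemma finrank_WW (κ : sl2 →ₗ[ℚ] sl2 →ₗ[ℚ] ℚ) (hκ : ∀ x y z : sl2, κ ⁅x, y⁆ z = κ x ⁅y, z⁆)
    (hkap : ∀ x y : sl2,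
      κ x y = x.1 0 1 * y.1 1 0 + 2 * (x.1 0 0 * y.1 0 0) + x.1 1 0 * y.1 0 1)
    {n : ℕ} (hn : 3 ≤ n) :
    Module.finrank ℚ (WW κ n) + (if Even n then 1 else 0) = Module.finrank ℚ (GG n) := by
  rw [← dim_split (WW κ n) (WW_le κ hκ n)]
  congr 1
  have hsym : ∀ g ∈ GG n ⊓ (ipB n).orthogonal (WW κ n), g ∈ GG n ∧ Sym' g := by
    intro g hg
    refine ⟨hg.1, ?_⟩
    obtain ⟨k, rfl⟩ : ∃ k, n = k + 2 := ⟨n - 2, by omega⟩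
    exact (main_ind κ hκ hkap k g hg.1 ((mem_orth κ g).1 hg.2)).1
  split_ifs with he
  · obtain ⟨m, rfl⟩ : ∃ m, n = 2 * m := he.exists_two_nsmul.imp fun m h => by simpa using h
    have hS : SS m ∈ GG (2 * m) ⊓ (ipB (2 * m)).orthogonal (WW κ (2 * m)) :=
      ⟨SS_mem m, (mem_orth κ _).2 (Sym_orth κ hn (SS_sym m))⟩
    symm
    refine finrank_eq_one (⟨SS m, hS⟩ : (GG (2 * m) ⊓ (ipB (2 * m)).orthogonal (WW κ (2 * m)) : Submodule ℚ _)) ?_ ?_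
    · intro h
      apply SS_one m
      have := congrArg Subtype.val h
      exact congrFun this _
    · rintro ⟨g, hg⟩
      refine ⟨g (fun _ => 1) / SS m (fun _ => 1), ?_⟩
      apply Subtype.ext
      change (g (fun _ => 1) / SS m (fun _ => 1)) • SS m = g
      rw [← sub_eq_zero]
      obtain ⟨g1, g2⟩ := hsym g hg
      refine symZ (Submodule.sub_mem _ (Submodule.smul_mem _ _ (SS_mem m)) g1) ?_ ?_
      · intro π w
        simp only [Pi.sub_apply, Pi.smul_apply, SS_sym m π w, g2 π w]
      · simp only [Pi.sub_apply, Pi.smul_apply, smul_eq_mul]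
        rw [div_mul_cancel₀ _ (SS_one m), sub_self]
  · have : GG n ⊓ (ipB n).orthogonal (WW κ n) = ⊥ := by
      rw [eq_bot_iff]
      intro g hg
      obtain ⟨g1, g2⟩ := hsym g hg
      exact symO (Nat.not_even_iff_odd.1 he) g1 g2
    rw [this, finrank_bot]

/-! ### Link with the tensor power -/

def coE : sl2 ≃ₗ[ℚ] (Fin 3 → ℚ) where
  toFun x := ![x.1 0 1, x.1 0 0, x.1 1 0]
  invFun v := v 0 • E + v 1 • H + v 2 • F
  map_add' x y := by ext i; fin_cases i <;> rfl
  map_smul' c x := by ext i; fin_cases i <;> rfl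
  left_inv x := by
    conv_rhs => rw [sl2_decomp x]
    simp
    try abel
  right_inv v := by ext i; fin_cases i <;> simp [E, H, F]

def bsl : Module.Basis (Fin 3) ℚ sl2 := Module.Basis.ofEquivFun coE

def rv : Fin 3 → Fin 3 := ![2, 1, 0]
def rc : Fin 3 → ℚ := ![1, 1/2, 1]

lemma bsl_repr (κ : sl2 →ₗ[ℚ] sl2 →ₗ[ℚ] ℚ)
    (hkap : ∀ x y : sl2,
      κ x y = x.1 0 1 * y.1 1 0 + 2 * (x.1 0 0 * y.1 0 0) + x.1 1 0 * y.1 0 1) (x : sl2)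
    (a : Fin 3) : bsl.repr x a = rc a * κ x (bb (rv a)) := by
  rw [hkap]
  change coE x a = _
  fin_cases a <;> simp [coE, rc, rv, E, H, F]

def Psi (κ : sl2 →ₗ[ℚ] sl2 →ₗ[ℚ] ℚ) (n : ℕ) : TP n →ₗ[ℚ] ((Fin n → Fin 3) → ℚ) :=
  LinearMap.pi fun w => pairT κ n (bb ∘ w)

lemma Psi_inj (κ : sl2 →ₗ[ℚ] sl2 →ₗ[ℚ] ℚ)
    (hkap : ∀ x y : sl2,
      κ x y = x.1 0 1 * y.1 1 0 + 2 * (x.1 0 0 * y.1 0 0) + x.1 1 0 * y.1 0 1) (n : ℕ) :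
    Function.Injective (Psi κ n) := by
  rw [← LinearMap.ker_eq_bot, LinearMap.ker_eq_bot']
  intro t ht
  let B := Basis.piTensorProduct (R := ℚ) (fun _ : Fin n => bsl)
  have key : ∀ p, B.coord p = (∏ i, rc (p i)) • pairT κ n (bb ∘ (rv ∘ p)) := by
    intro p
    apply PiTensorProduct.ext
    ext x
    simp only [LinearMap.compMultilinearMap_apply, Module.Basis.coord_apply, B,
      Basis.piTensorProduct_repr_tprod_apply, bsl_repr κ hkap, Finset.prod_mul_distrib,
      LinearMap.smul_apply, smul_eq_mul, pairT, PiTensorProduct.lift.tprod]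
    rfl
  apply B.ext_elem
  intro p
  have h1 := LinearMap.congr_fun (key p) t
  have h2 := congrFun ht (rv ∘ p)
  rw [Module.Basis.coord_apply] at h1
  rw [h1, LinearMap.smul_apply]
  change _ • Psi κ n t (rv ∘ p) = _
  rw [h2]; simp

theorem finrank_span_linear_tree_tensors
    (κ : sl2 →ₗ[ℚ] sl2 →ₗ[ℚ] ℚ)
    (hHH : κ H H = 2) (hEF : κ E F = 1) (hFE : κ F E = 1)
    (hHE : κ H E = 0) (hEH : κ E H = 0) (hHF : κ H F = 0) (hFH : κ F H = 0)
    (hEE : κ E E = 0) (hFF : κ F F = 0)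
    (R : ℕ → ℕ) (hR2 : R 2 = 1) (hR3 : R 3 = 1)
    (hRrec : ∀ n, 4 ≤ n → (n + 1) * R n = (n - 1) * (2 * R (n - 1) + 3 * R (n - 2))) :
    ∀ n, 3 ≤ n →
    ∀ t : Equiv.Perm (Fin n) → TP n,
      (∀ σ (x : Fin n → sl2), pairT κ n x (t σ) = brkVal κ (x ∘ σ)) →
      Module.finrank ℚ (Submodule.span ℚ (Set.range t))
        = (if Even n then R n - 1 else R n) := by
  intro n hn t ht
  have hkap := kappa_eq κ hHH hEF hFE hHE hEH hHF hFH hEE hFF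
  have hκ := kappa_inv κ hkap
  have h1 : (Submodule.span ℚ (Set.range t)).map (Psi κ n) = WW κ n := by
    rw [Submodule.map_span, ← Set.range_comp, WW]
    congr 2
    funext σ
    funext w
    change pairT κ n (bb ∘ w) (t σ) = _
    rw [ht, FT, val, brkVal, List.map_ofFn]
    rfl
  have h2 := (Submodule.equivMapOfInjective (Psi κ n) (Psi_inj κ hkap n)
    (Submodule.span ℚ (Set.range t))).finrank_eq
  rw [h1] at h2
  have h3 := finrank_WW κ hκ hkap hn
  have h4 := finrank_GG n
  obtain ⟨k, rfl⟩ : ∃ k, n = k + 2 := ⟨n - 2, by omega⟩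
  have h5 := (R_eq R hR2 hR3 hRrec k).1
  rw [h2]
  split_ifs at h3 ⊢ <;> omega
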